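/- arXiv:2501.05701 — 4 statements merged into one kernel-verified Lean document; each statement's English description precedes it below -/
import Mathlib

section
/- Let K̃ = (I_n − (1/n)𝟙𝟙ᵀ) ⊗ I_d, let ÃᵀÃ be the tensored graph Laplacian of a connected graph with ρ̃₂K̃ ⪯ ÃᵀÃ ⪯ ρ̃₁K̃ for some ρ̃₁ ≥ ρ̃₂ > 0, and let Q̃ = (ÃᵀÃ)†. Then for any vectors X, v ∈ ℝ^{nd} and any constants a > 0, b ≥ 0, c ≥ 0, d ≥ 0 satisfying b/ρ̃₁ + bc ≥ d²/(4a), it holds that a‖X‖²_{K̃} + b‖v‖²_{Q̃ + cK̃} + d⟨X, v⟩_{K̃} ≥ 0. -/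
/-!
Write `K`, `S`, `Q` for the consensus projector, the Laplacian and its pseudoinverse. The bounds
`ρ₂ K ⪯ S ⪯ ρ₁ K` force `ker S = ker K`, so `S K = S` and the orthogonal projector `Q S = S Q`
equals `K` (`pinv_mul_eq_proj`). Expanding
`0 ≤ ‖Q v - ρ₁⁻¹ v‖²_S = ‖v‖²_Q - 2 ρ₁⁻¹ ‖v‖²_K + ρ₁⁻² ‖v‖²_S` and using `S ⪯ ρ₁ K` gives
`ρ₁⁻¹ K ⪯ Q` (`pinv_lower_bound`). Hence `b ‖v‖²_{Q + cK} ≥ (b / ρ₁ + b c) ‖v‖²_K`, which is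
at least `d² / (4a) ‖v‖²_K`, and the quadratic form is bounded below by
`a ‖X + d / (2a) v‖²_K ≥ 0`.
-/


open Matrix MeasureTheory ProbabilityTheory
open scoped Kronecker

noncomputable section

/-- squared Euclidean norm ‖v‖² of a finitely indexed real vector. -/
def sqnorm {ι : Type*} [Fintype ι] (v : ι → ℝ) : ℝ := ∑ i, (v i) ^ 2

/-- Euclidean norm ‖v‖. -/
def enorm' {ι : Type*} [Fintype ι] (v : ι → ℝ) : ℝ := Real.sqrt (sqnorm v)

/-- matrix-weighted squared (semi)norm ‖v‖²_P = vᵀ P v. -/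
def wnorm2 {ι : Type*} [Fintype ι] (P : Matrix ι ι ℝ) (v : ι → ℝ) : ℝ := v ⬝ᵥ P.mulVec v

/-- matrix-weighted inner product ⟨x, y⟩_P = xᵀ P y. -/
def winner {ι : Type*} [Fintype ι] (P : Matrix ι ι ℝ) (x y : ι → ℝ) : ℝ := x ⬝ᵥ P.mulVec y

/-- the consensus projector K̃ = (Iₙ − (1/n)𝟙𝟙ᵀ) ⊗ I_d. -/
def Ktil (n d : ℕ) : Matrix (Fin n × Fin d) (Fin n × Fin d) ℝ :=
  ((1 : Matrix (Fin n) (Fin n) ℝ) - (n : ℝ)⁻¹ • Matrix.of (fun _ _ => (1 : ℝ))) ⊗ₖ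
    (1 : Matrix (Fin d) (Fin d) ℝ)

/-- `A` is a (signed) incidence matrix of an undirected graph: each row has exactly one `+1`
entry and one `-1` entry, all other entries being `0`. -/
def IsIncidence {e n : ℕ} (A : Matrix (Fin e) (Fin n) ℝ) : Prop :=
  ∀ r : Fin e, ∃ i j : Fin n, i ≠ j ∧ A r i = 1 ∧ A r j = -1 ∧
    ∀ k : Fin n, k ≠ i → k ≠ j → A r k = 0

/-- `Q` is the Moore–Penrose pseudoinverse of `S` (the four Penrose conditions). -/
def IsMoorePenrose {ι : Type*} [Fintype ι] [DecidableEq ι] (S Q : Matrix ι ι ℝ) : Prop :=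
  S * Q * S = S ∧ Q * S * Q = Q ∧ (S * Q)ᵀ = S * Q ∧ (Q * S)ᵀ = Q * S

/-- the ℓ₂ operator (spectral) norm of a square matrix. -/
def specNorm {ι : Type*} [Fintype ι] [DecidableEq ι] (S : Matrix ι ι ℝ) : ℝ :=
  ‖Matrix.toEuclideanCLM (𝕜 := ℝ) S‖

/-- Ã = A ⊗ I_d. -/
def Atil {e n : ℕ} (d : ℕ) (A : Matrix (Fin e) (Fin n) ℝ) :
    Matrix (Fin e × Fin d) (Fin n × Fin d) ℝ :=
  A ⊗ₖ (1 : Matrix (Fin d) (Fin d) ℝ)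

/-- the (tensored) graph Laplacian ÃᵀÃ. -/
def lapl {e n : ℕ} (d : ℕ) (A : Matrix (Fin e) (Fin n) ℝ) :
    Matrix (Fin n × Fin d) (Fin n × Fin d) ℝ :=
  (Atil d A)ᵀ * Atil d A

/-- the network average X̄ = (1/n)(𝟙ᵀ ⊗ I_d)X. -/
def xbar {n d : ℕ} (X : Fin n × Fin d → ℝ) : Fin d → ℝ := fun j => (n : ℝ)⁻¹ * ∑ i, X (i, j)

/-- the consensus embedding (𝟙 ⊗ I_d)x̄ of a vector x̄ ∈ ℝ^d into ℝ^{nd}. -/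
def consVec {d : ℕ} (n : ℕ) (x : Fin d → ℝ) : Fin n × Fin d → ℝ := fun p => x p.2

/-- the stacked gradient ∇𝐟(X) = (∇f₁(X₁), …, ∇f_n(X_n)). -/
def gradF {n d : ℕ} (gradf : Fin n → (Fin d → ℝ) → (Fin d → ℝ)) (X : Fin n × Fin d → ℝ) :
    Fin n × Fin d → ℝ := fun p => gradf p.1 (fun j => X (p.1, j)) p.2

/-- the averaged objective f(x̄) = (1/n)∑ᵢ fᵢ(x̄). -/
def fbar {n d : ℕ} (f : Fin n → (Fin d → ℝ) → ℝ) (x : Fin d → ℝ) : ℝ :=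
  (n : ℝ)⁻¹ * ∑ i, f i x

/-- the averaged gradient ∇f(x̄) = (1/n)∑ᵢ ∇fᵢ(x̄). -/
def gradfbar {n d : ℕ} (gradf : Fin n → (Fin d → ℝ) → (Fin d → ℝ)) (x : Fin d → ℝ) :
    Fin d → ℝ := fun j => (n : ℝ)⁻¹ * ∑ i, gradf i x j

/-- a gradient vector, seen as a continuous linear functional on ℝ^d. -/
def dotCLM {d : ℕ} (g : Fin d → ℝ) : (Fin d → ℝ) →L[ℝ] ℝ :=
  ∑ j, g j • ContinuousLinearMap.proj j

/-- the auxiliary dual-tracking variable vᵗ = α(λ̃ᵗ + ∇𝐟((𝟙 ⊗ I_d)X̄ᵗ)). -/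
def vTi {n d : ℕ} (gradf : Fin n → (Fin d → ℝ) → (Fin d → ℝ)) (α : ℝ)
    (lam X : Fin n × Fin d → ℝ) : Fin n × Fin d → ℝ :=
  α • (lam + gradF gradf (consVec n (xbar X)))

/-- δ̃ = max{(1−δ)²(1−δ/2)²/((1−δ/2)²−(1−δ)²), 1}. -/
def deltaTil (δ : ℝ) : ℝ := max ((1 - δ) ^ 2 * (1 - δ / 2) ^ 2 / ((1 - δ / 2) ^ 2 - (1 - δ) ^ 2)) 1

/-- δ₂ = max{16η/δ, 1}. -/
def delta2 (δ η : ℝ) : ℝ := max (16 * η / δ) 1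

/-- δ₁ = 12·max{2, 2/(ρ̃₂η), δ₂δ̃}. -/
def delta1 (δ η ρ₂ : ℝ) : ℝ := 12 * max (max 2 (2 / (ρ₂ * η))) (delta2 δ η * deltaTil δ)

/-- θ_lb. -/
def thetaLb (n : ℕ) (L a η ρ₁ ρ₂ δ : ℝ) : ℝ :=
  max (4 * L ^ 2 / (n * ρ₂ * a))
    ((2 / ρ₂) * (1 + 2 * L + 8 * η * ρ₁ ^ 2 / ρ₂ +
      delta1 δ η ρ₂ * (3 / 2 + 3 * L ^ 2 + η * ρ₁ + ρ₁ ^ 2 / 2)))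

/-- α_ub = (max{16η, δ}/(320θ²))·min{1/M², na/M², 1/ρ̃₁²}. -/
def alphaUb (n : ℕ) (a η δ θ M ρ₁ : ℝ) : ℝ :=
  (max (16 * η) δ / (320 * θ ^ 2)) * min (min (1 / M ^ 2) (n * a / M ^ 2)) (1 / ρ₁ ^ 2)

/-- one step of the TiCoPD recursion, driven by compression randomness ξ. -/
def TiCoPD {e n d : ℕ} {Ω S : Type*} (A : Matrix (Fin e) (Fin n) ℝ)
    (gradf : Fin n → (Fin d → ℝ) → (Fin d → ℝ)) (α β θ η : ℝ)
    (ξ : ℕ → Ω → S) (Q : (Fin n × Fin d → ℝ) → S → (Fin n × Fin d → ℝ))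
    (X Xhat lam : ℕ → Ω → (Fin n × Fin d → ℝ)) : Prop :=
  ∀ t ω,
    X (t + 1) ω = β • X t ω + (1 - β) • Xhat t ω -
        α • (gradF gradf (X t ω) + lam t ω + θ • (lapl d A).mulVec (Xhat t ω)) ∧
    lam (t + 1) ω = lam t ω + η • (lapl d A).mulVec (Xhat t ω) ∧
    Xhat (t + 1) ω = Xhat t ω + Q (X (t + 1) ω - Xhat t ω) (ξ (t + 1) ω)

/-- the Lyapunov function F_t of Theorem 1. -/
def FLyap {n d : ℕ} (f : Fin n → (Fin d → ℝ) → ℝ)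
    (gradf : Fin n → (Fin d → ℝ) → (Fin d → ℝ))
    (Qtil : Matrix (Fin n × Fin d) (Fin n × Fin d) ℝ)
    (fstar a α η θ δ₁ δ₂ : ℝ) (X Xhat lam : Fin n × Fin d → ℝ) : ℝ :=
  fbar f (xbar X) - fstar +
    (a / (η * α)) *
      wnorm2 (Qtil + (α * ((δ₁ / 2) * (θ + η) - θ - δ₂ * θ)) • Ktil n d) (vTi gradf α lam X) +
    a * wnorm2 (Ktil n d) X +
    δ₁ * a * winner (Ktil n d) X (vTi gradf α lam X) +
    δ₂ * a * sqnorm (Xhat - X)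


lemma Ktil_transpose (n d : ℕ) : (Ktil n d)ᵀ = Ktil n d := by
  unfold Ktil
  rw [← Matrix.kroneckerMap_transpose]
  congr 1
  · ext i j
    simp [Matrix.one_apply, eq_comm]
  · simp

lemma Ktil_mul_self {n : ℕ} (d : ℕ) (hn : n ≠ 0) : Ktil n d * Ktil n d = Ktil n d := by
  have hn' : (n : ℝ) ≠ 0 := by exact_mod_cast hn
  unfold Ktil
  rw [← Matrix.mul_kronecker_mul, one_mul]
  congr 1
  have h : (Matrix.of (fun _ _ => (1 : ℝ)) : Matrix (Fin n) (Fin n) ℝ) *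
      Matrix.of (fun _ _ => (1 : ℝ)) = (n : ℝ) • Matrix.of (fun _ _ => (1 : ℝ)) := by
    ext i j
    simp [Matrix.mul_apply]
  simp only [sub_mul, mul_sub, one_mul, mul_one, Matrix.smul_mul, Matrix.mul_smul, h, smul_smul]
  rw [inv_mul_cancel₀ hn', mul_one]
  simp

section Abstract

variable {ι : Type*} [Fintype ι] [DecidableEq ι]

/-- The pseudoinverse of a symmetric matrix commutes with it. -/
lemma IsMoorePenrose.comm {S Q : Matrix ι ι ℝ} (hS : Sᵀ = S) (h : IsMoorePenrose S Q) :
    Q * S = S * Q := by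
  obtain ⟨h1, h2, h3, h4⟩ := h
  rw [Matrix.transpose_mul, hS] at h3 h4
  -- both products equal `S * Q * (Q * S)`
  have e1 : Q * S = S * Q * (Q * S) := by
    calc Q * S = S * Qᵀ := h4.symm
      _ = (S * Q * S) * Qᵀ := by rw [h1]
      _ = S * Q * (Q * S) := by rw [Matrix.mul_assoc, h4]
  have e2 : S * Q = S * Q * (Q * S) := by
    calc S * Q = Qᵀ * S := h3.symm
      _ = Qᵀ * (S * Q * S) := by rw [h1]
      _ = (Qᵀ * S) * (Q * S) := by simp only [Matrix.mul_assoc]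
      _ = S * Q * (Q * S) := by rw [h3]
  exact e1.trans e2.symm

lemma IsMoorePenrose.transpose_eq {S Q : Matrix ι ι ℝ} (hS : Sᵀ = S) (h : IsMoorePenrose S Q) :
    Qᵀ = Q := by
  have hc := h.comm hS
  obtain ⟨h1, h2, h3, h4⟩ := h
  rw [Matrix.transpose_mul, hS] at h3 h4
  calc Qᵀ = (Q * S * Q)ᵀ := by rw [h2]
    _ = Qᵀ * S * Qᵀ := by simp only [Matrix.transpose_mul, hS, Matrix.mul_assoc]
    _ = Q * (S * Qᵀ) := by rw [h3, ← hc, Matrix.mul_assoc]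
    _ = Q * (S * Q) := by rw [h4, hc]
    _ = Q := by rw [← Matrix.mul_assoc, h2]

lemma proj_dot {K : Matrix ι ι ℝ} (hKt : Kᵀ = K) (hK : K * K = K) (x : ι → ℝ) :
    x ⬝ᵥ K *ᵥ x = (K *ᵥ x) ⬝ᵥ (K *ᵥ x) := by
  conv_lhs => rw [← hK]
  rw [← Matrix.mulVec_mulVec, Matrix.dotProduct_mulVec, ← Matrix.mulVec_transpose, hKt]

lemma psd_le {P R : Matrix ι ι ℝ} (h : (P - R).PosSemidef) (x : ι → ℝ) :
    x ⬝ᵥ R *ᵥ x ≤ x ⬝ᵥ P *ᵥ x := by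
  have := h.dotProduct_mulVec_nonneg x
  simp only [star_trivial, Matrix.sub_mulVec, dotProduct_sub] at this
  linarith

/-- The spectral bounds identify `ker S` with `ker K`, so the projector `Q S` onto the range of
`S` is `K`. -/
lemma pinv_mul_eq_proj {K S Q : Matrix ι ι ℝ} (hKt : Kᵀ = K) (hK : K * K = K)
    (hS : S.PosSemidef) {ρ₁ ρ₂ : ℝ} (hρ₂ : 0 < ρ₂) (ha : (S - ρ₂ • K).PosSemidef)
    (hb : (ρ₁ • K - S).PosSemidef) (h : IsMoorePenrose S Q) : Q * S = K := by
  have hSK : S * K = S := by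
    have : S * (1 - K) = 0 := by
      refine Matrix.ext_of_mulVec_single fun i => ?_
      set y := (1 - K) *ᵥ (Pi.single i (1 : ℝ)) with hy
      have hKy : K *ᵥ y = 0 := by
        rw [hy, Matrix.mulVec_mulVec, mul_sub, mul_one, hK, sub_self, Matrix.zero_mulVec]
      have hle := psd_le hb y
      rw [Matrix.smul_mulVec, hKy, smul_zero, dotProduct_zero] at hle
      have h0 := hS.dotProduct_mulVec_nonneg y
      rw [star_trivial] at h0
      rw [← Matrix.mulVec_mulVec, Matrix.zero_mulVec, ← hy,
        ← hS.dotProduct_mulVec_zero_iff, star_trivial]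
      exact le_antisymm hle h0
    rw [mul_sub, mul_one, sub_eq_zero] at this
    exact this.symm
  have hKQ : K * (Q * S) = K := by
    have : K * (1 - Q * S) = 0 := by
      refine Matrix.ext_of_mulVec_single fun i => ?_
      set y := (1 - Q * S) *ᵥ (Pi.single i (1 : ℝ)) with hy
      have hSy : S *ᵥ y = 0 := by
        rw [hy, Matrix.mulVec_mulVec, mul_sub, mul_one, ← Matrix.mul_assoc, h.1, sub_self,
          Matrix.zero_mulVec]
      have hle := psd_le ha y
      rw [Matrix.smul_mulVec, hSy, dotProduct_zero, dotProduct_smul, smul_eq_mul,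
        proj_dot hKt hK] at hle
      have h0 : 0 ≤ (K *ᵥ y) ⬝ᵥ (K *ᵥ y) := by
        simpa using dotProduct_star_self_nonneg (K *ᵥ y)
      rw [← Matrix.mulVec_mulVec, Matrix.zero_mulVec, ← hy, ← dotProduct_self_eq_zero]
      nlinarith
    rw [mul_sub, mul_one, sub_eq_zero] at this
    exact this.symm
  calc Q * S = Q * S * K := by rw [Matrix.mul_assoc, hSK]
    _ = (K * (Q * S))ᵀ := by rw [Matrix.transpose_mul, h.2.2.2, hKt]
    _ = K := by rw [hKQ, hKt]

/-- The upper bound `S ⪯ ρ₁ K` inverts to `ρ₁⁻¹ K ⪯ Q`. -/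
lemma pinv_lower_bound {K S Q : Matrix ι ι ℝ} (hKt : Kᵀ = K) (hK : K * K = K)
    (hS : S.PosSemidef) {ρ₁ ρ₂ : ℝ} (hρ₁ : 0 < ρ₁) (hρ₂ : 0 < ρ₂)
    (ha : (S - ρ₂ • K).PosSemidef) (hb : (ρ₁ • K - S).PosSemidef) (h : IsMoorePenrose S Q)
    (v : ι → ℝ) : ρ₁⁻¹ * (v ⬝ᵥ K *ᵥ v) ≤ v ⬝ᵥ Q *ᵥ v := by
  have hSt : Sᵀ = S := by simpa using hS.isHermitian.eq
  have hQS := pinv_mul_eq_proj hKt hK hS hρ₂ ha hb h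
  have hSQ : S * Q = K := by rw [← h.comm hSt, hQS]
  have hQt := h.transpose_eq hSt
  have h0 := hS.dotProduct_mulVec_nonneg (Q *ᵥ v - ρ₁⁻¹ • v)
  have e (w : ι → ℝ) : (Q *ᵥ v) ⬝ᵥ w = v ⬝ᵥ Q *ᵥ w := by
    rw [Matrix.dotProduct_mulVec v, ← Matrix.mulVec_transpose, hQt]
  have hle := psd_le hb v
  rw [Matrix.smul_mulVec, dotProduct_smul, smul_eq_mul] at hle
  simp only [star_trivial, Matrix.mulVec_sub, Matrix.mulVec_smul, sub_dotProduct, dotProduct_sub,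
    smul_dotProduct, dotProduct_smul, smul_eq_mul, e, Matrix.mulVec_mulVec, hSQ, hQS] at h0
  rw [show Q * K = Q by rw [← hSQ, ← Matrix.mul_assoc, h.2.1]] at h0
  have h1 : ρ₁⁻¹ * (ρ₁⁻¹ * (v ⬝ᵥ S *ᵥ v)) ≤ ρ₁⁻¹ * (v ⬝ᵥ K *ᵥ v) := by
    refine mul_le_mul_of_nonneg_left ?_ (by positivity)
    rw [inv_mul_le_iff₀ hρ₁]
    exact hle
  linarith

end Abstract

/-- **Lyapunov cross-term non-negativity.**  For the consensus projector K̃, the tensored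
Laplacian S = ÃᵀÃ of a connected graph with ρ̃₂K̃ ⪯ S ⪯ ρ̃₁K̃, and its pseudoinverse Q̃:
whenever a > 0, b, c, d ≥ 0 and b/ρ̃₁ + bc ≥ d²/(4a), one has
a‖X‖²_K̃ + b‖v‖²_{Q̃+cK̃} + d⟨X,v⟩_K̃ ≥ 0. -/
theorem lyapunov_quadratic_nonneg
    {n dim e : ℕ} (hn : 2 ≤ n) (hd : 1 ≤ dim)
    (A : Matrix (Fin e) (Fin n) ℝ) (hA : IsIncidence A)
    (ρ₁ ρ₂ : ℝ) (hρ : ρ₂ ≤ ρ₁) (hρ₂ : 0 < ρ₂)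
    (h2a : (lapl dim A - ρ₂ • Ktil n dim).PosSemidef)
    (h2b : (ρ₁ • Ktil n dim - lapl dim A).PosSemidef)
    (Qtil : Matrix (Fin n × Fin dim) (Fin n × Fin dim) ℝ)
    (hQtil : IsMoorePenrose (lapl dim A) Qtil) :
    ∀ (X v : Fin n × Fin dim → ℝ) (a b c d : ℝ),
      0 < a → 0 ≤ b → 0 ≤ c → 0 ≤ d →
      d ^ 2 / (4 * a) ≤ b / ρ₁ + b * c →
      0 ≤ a * wnorm2 (Ktil n dim) X + b * wnorm2 (Qtil + c • Ktil n dim) v +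
            d * winner (Ktil n dim) X v := by
  intro X v a b c d ha hb _ _ hcond
  have hKt := Ktil_transpose n dim
  have hK := Ktil_mul_self dim (n := n) (by omega)
  have hS : (lapl dim A).PosSemidef := by
    simpa [lapl] using Matrix.posSemidef_conjTranspose_mul_self (Atil dim A)
  have hQ := pinv_lower_bound hKt hK hS (hρ₂.trans_le hρ) hρ₂ h2a h2b hQtil v
  unfold wnorm2 winner
  generalize Ktil n dim = K at *
  have hnn (x : Fin n × Fin dim → ℝ) : 0 ≤ x ⬝ᵥ K *ᵥ x := by
    rw [proj_dot hKt hK]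
    simpa using dotProduct_star_self_nonneg (K *ᵥ x)
  have hsymm : v ⬝ᵥ K *ᵥ X = X ⬝ᵥ K *ᵥ v := by
    rw [Matrix.dotProduct_mulVec, ← Matrix.mulVec_transpose, hKt, dotProduct_comm]
  -- completing the square in `X`
  have hsq := mul_nonneg ha.le (hnn (X + (d / (2 * a)) • v))
  simp only [Matrix.mulVec_add, Matrix.mulVec_smul, add_dotProduct, dotProduct_add,
    smul_dotProduct, dotProduct_smul, smul_eq_mul, hsymm] at hsq
  simp only [Matrix.add_mulVec, Matrix.smul_mulVec, dotProduct_add, dotProduct_smul, smul_eq_mul]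
  have hbQ := mul_le_mul_of_nonneg_left hQ hb
  have hcv := mul_le_mul_of_nonneg_right hcond (hnn v)
  have hexp : a * (X ⬝ᵥ K *ᵥ X + d / (2 * a) * (X ⬝ᵥ K *ᵥ v) +
      d / (2 * a) * (X ⬝ᵥ K *ᵥ v + d / (2 * a) * (v ⬝ᵥ K *ᵥ v))) =
      a * (X ⬝ᵥ K *ᵥ X) + d * (X ⬝ᵥ K *ᵥ v) + d ^ 2 / (4 * a) * (v ⬝ᵥ K *ᵥ v) := by
    field_simp
    ring
  rw [div_eq_mul_inv b] at hcv
  linarith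
end
end

section
/- (Descent lemma.) Suppose each f_i is L-smooth (Assumption 1), λ̃ᵗ = Ãᵀμ for some μ ∈ ℝ^{|E|d}, and X^{t+1} = βXᵗ + (1−β)X̂ᵗ − α(∇𝐟(Xᵗ) + λ̃ᵗ + θÃᵀÃX̂ᵗ) with θ > 0, β = 1 − αθM and 0 < α ≤ 1/(16L). Then f(X̄^{t+1}) ≤ f(X̄ᵗ) − (α/4)‖∇f(X̄ᵗ)‖² + (αL²/(2n) + 2α²L³/n)‖Xᵗ‖²_{K̃} + (α θ²M²(Lα + 2)/n)‖X̂ᵗ − Xᵗ‖². -/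
/-! The column sums of `Ãᵀ` vanish, so averaging over the nodes removes both the dual variable and
the Laplacian term from the primal step and leaves
`X̄⁺ = X̄ + α (θ M D − g)`, with `D` the average of `X̂ − X` and `g` the average of the local
gradients at `X`.  The quadratic upper bound for an `L`-smooth function (`smooth_upper_bound`),
averaged over the nodes, bounds `f(X̄⁺)` by `f(X̄) + ⟨G, s⟩ + (L/2)‖s‖²`, with `G = ∇f(X̄)` and
`s = α (θ M D − g)`.  Young's inequality, applied coordinate by coordinate, splits this into
multiples of `‖G‖²`, `‖g − G‖²` and `‖D‖²`.  By Jensen's inequality (`sqnorm_xbar_le`) an average is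
controlled by the stacked vector, which yields `‖D‖² ≤ ‖X̂ − X‖²/n` and, with the Lipschitz bound,
`‖g − G‖² ≤ L²‖X‖²_K̃/n`. -/

open Matrix MeasureTheory ProbabilityTheory
open scoped Kronecker

noncomputable section

/-! ### Quadratic upper bound -/

lemma sqnorm_nonneg {ι : Type*} [Fintype ι] (v : ι → ℝ) : 0 ≤ sqnorm v :=
  Finset.sum_nonneg fun _ _ => sq_nonneg _

lemma dotCLM_apply {d : ℕ} (g v : Fin d → ℝ) : dotCLM g v = ∑ j, g j * v j := by
  simp [dotCLM]

/-- Cauchy–Schwarz. -/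
lemma dot_le_enorm {ι : Type*} [Fintype ι] (u v : ι → ℝ) :
    ∑ j, u j * v j ≤ enorm' u * enorm' v :=
  Real.sum_mul_le_sqrt_mul_sqrt Finset.univ u v

/-- The quadratic upper bound for a function with `L`-Lipschitz gradient. -/
lemma smooth_upper_bound {d : ℕ} (f : (Fin d → ℝ) → ℝ) (g : (Fin d → ℝ) → (Fin d → ℝ)) (L : ℝ)
    (hdiff : ∀ x, HasFDerivAt f (dotCLM (g x)) x)
    (hlip : ∀ x y, enorm' (g x - g y) ≤ L * enorm' (x - y)) (x s : Fin d → ℝ) :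
    f (x + s) ≤ f x + ∑ j, g x j * s j + L / 2 * sqnorm s := by
  -- The gap between `f` and its quadratic model along the segment is nonincreasing.
  let φ : ℝ → ℝ := fun t => f (x + t • s) - t * (∑ j, g x j * s j) - L / 2 * sqnorm s * t ^ 2
  have hφ : ∀ t, HasDerivAt φ (∑ j, g (x + t • s) j * s j - ∑ j, g x j * s j
      - L * sqnorm s * t) t := by
    intro t
    have h1 : HasDerivAt (fun t : ℝ => x + t • s) s t := by
      simpa using ((hasDerivAt_id t).smul_const s).const_add x
    have h2 := (hdiff (x + t • s)).comp_hasDerivAt t h1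
    rw [dotCLM_apply] at h2
    have h3 := (h2.sub ((hasDerivAt_id t).mul_const (∑ j, g x j * s j))).sub
      ((hasDerivAt_pow 2 t).const_mul (L / 2 * sqnorm s))
    refine HasDerivAt.congr_deriv (f := φ) h3 ?_
    simp
    ring
  have hanti : AntitoneOn φ (Set.Ici 0) := by
    apply antitoneOn_of_deriv_nonpos (convex_Ici 0)
    · exact fun t _ => (hφ t).continuousAt.continuousWithinAt
    · exact fun t _ => (hφ t).differentiableAt.differentiableWithinAt
    · intro t ht
      rw [interior_Ici] at ht
      have ht : 0 < t := ht
      rw [(hφ t).deriv]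
      have hcs := dot_le_enorm (g (x + t • s) - g x) s
      have hl := hlip (x + t • s) x
      have hts : enorm' (x + t • s - x) = t * enorm' s := by
        have : sqnorm (x + t • s - x) = t ^ 2 * sqnorm s := by
          simp [sqnorm, Finset.mul_sum, mul_pow]
        rw [enorm', this, Real.sqrt_mul (sq_nonneg t), Real.sqrt_sq ht.le, enorm']
      rw [hts] at hl
      have hs : enorm' s * enorm' s = sqnorm s := Real.mul_self_sqrt (sqnorm_nonneg s)
      have h4 := mul_le_mul_of_nonneg_right hl (Real.sqrt_nonneg (sqnorm s))
      change _ * enorm' s ≤ _ * enorm' s at h4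
      have h5 : ∑ j, (g (x + t • s) - g x) j * s j
          = ∑ j, g (x + t • s) j * s j - ∑ j, g x j * s j := by
        simp [sub_mul, Finset.sum_sub_distrib]
      have h6 : L * (t * enorm' s) * enorm' s = L * sqnorm s * t := by
        rw [← hs]; ring
      linarith
  have h := hanti (Set.mem_Ici.2 le_rfl) (Set.mem_Ici.2 zero_le_one) zero_le_one
  simp only [φ] at h
  simp at h
  linarith

/-! ### Averages and distance to consensus -/

/-- Jensen: the squared norm of the average is at most the average of the squared norms. -/
lemma sqnorm_xbar_le {n d : ℕ} (hn : 0 < n) (Y : Fin n × Fin d → ℝ) :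
    sqnorm (xbar Y) ≤ (n : ℝ)⁻¹ * sqnorm Y := by
  have hn' : (0 : ℝ) < n := by exact_mod_cast hn
  unfold sqnorm xbar
  rw [Fintype.sum_prod_type_right, Finset.mul_sum]
  refine Finset.sum_le_sum fun j _ => ?_
  have h := sq_sum_le_card_mul_sum_sq (s := Finset.univ) (f := fun i : Fin n => Y (i, j))
  simp only [Finset.card_univ, Fintype.card_fin] at h
  calc ((n : ℝ)⁻¹ * ∑ i, Y (i, j)) ^ 2 = (n : ℝ)⁻¹ ^ 2 * (∑ i, Y (i, j)) ^ 2 := by ring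
    _ ≤ (n : ℝ)⁻¹ ^ 2 * (n * ∑ i, Y (i, j) ^ 2) := by gcongr
    _ = (n : ℝ)⁻¹ * ∑ i, Y (i, j) ^ 2 := by field_simp

/-- The row sums of an incidence matrix vanish, so vectors in the range of `Ãᵀ` have zero average. -/
lemma xbar_range {n d e : ℕ} (A : Matrix (Fin e) (Fin n) ℝ) (hA : IsIncidence A)
    (v : Fin e × Fin d → ℝ) : xbar ((Atil d A)ᵀ.mulVec v) = 0 := by
  have hrow : ∀ r, ∑ i, A r i = 0 := by
    intro r
    obtain ⟨i, j, hij, hi, hj, h0⟩ := hA r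
    rw [Fintype.sum_eq_add i j hij fun k hk => h0 k hk.1 hk.2, hi, hj]
    norm_num
  funext j
  simp only [xbar, Matrix.mulVec, dotProduct, Matrix.transpose_apply, Atil,
    Matrix.kroneckerMap_apply, Pi.zero_apply]
  rw [Finset.sum_comm]
  have h (p : Fin e × Fin d) :
      ∑ i, A p.1 i * (1 : Matrix (Fin d) (Fin d) ℝ) p.2 j * v p = 0 := by
    simp only [mul_assoc, ← Finset.sum_mul, hrow, zero_mul]
  simp [h]

lemma Ktil_mulVec {n d : ℕ} (X : Fin n × Fin d → ℝ) :
    (Ktil n d).mulVec X = X - consVec n (xbar X) := by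
  funext ⟨i, j⟩
  simp only [Ktil, Matrix.mulVec, dotProduct, Fintype.sum_prod_type, Matrix.kroneckerMap_apply,
    Matrix.sub_apply, Matrix.smul_apply, Matrix.of_apply, Matrix.one_apply, Pi.sub_apply, consVec,
    xbar, smul_eq_mul, mul_one, mul_ite, mul_zero, ite_mul, zero_mul, Finset.sum_ite_eq,
    Finset.mem_univ, if_true, sub_mul, one_mul, Finset.sum_sub_distrib, Finset.mul_sum]

/-- The `K̃`-seminorm measures the distance to consensus. -/
lemma wnorm2_Ktil {n d : ℕ} (hn : 0 < n) (X : Fin n × Fin d → ℝ) :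
    wnorm2 (Ktil n d) X = sqnorm (X - consVec n (xbar X)) := by
  have hn' : (n : ℝ) ≠ 0 := by exact_mod_cast hn.ne'
  rw [wnorm2, Ktil_mulVec]
  simp only [dotProduct, sqnorm, Fintype.sum_prod_type_right, Pi.sub_apply, consVec]
  refine Finset.sum_congr rfl fun j _ => ?_
  have hs : ∑ i, X (i, j) = n * xbar X j := by simp only [xbar]; field_simp
  have h0 : ∑ i, xbar X j * (X (i, j) - xbar X j) = 0 := by
    rw [← Finset.mul_sum, Finset.sum_sub_distrib, hs]; simp
  rw [← sub_eq_zero, ← Finset.sum_sub_distrib, ← h0]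
  exact Finset.sum_congr rfl fun i _ => by ring

lemma gradF_consVec {n d : ℕ} (gradf : Fin n → (Fin d → ℝ) → (Fin d → ℝ)) (x : Fin d → ℝ) :
    xbar (gradF gradf (consVec n x)) = gradfbar gradf x := rfl

lemma xbar_sub {n d : ℕ} (X Y : Fin n × Fin d → ℝ) : xbar (X - Y) = xbar X - xbar Y := by
  funext j; simp [xbar, Finset.sum_sub_distrib, mul_sub]

lemma xbar_add {n d : ℕ} (X Y : Fin n × Fin d → ℝ) : xbar (X + Y) = xbar X + xbar Y := by
  funext j; simp [xbar, Finset.sum_add_distrib, mul_add]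

lemma xbar_smul {n d : ℕ} (c : ℝ) (X : Fin n × Fin d → ℝ) : xbar (c • X) = c • xbar X := by
  funext j; simp [xbar, ← Finset.mul_sum, mul_left_comm]

/-! ### The averaged objective -/

lemma fbar_upper_bound {n d : ℕ} (hn : 0 < n)
    (f : Fin n → (Fin d → ℝ) → ℝ) (gradf : Fin n → (Fin d → ℝ) → (Fin d → ℝ)) (L : ℝ)
    (hdiff : ∀ i x, HasFDerivAt (f i) (dotCLM (gradf i x)) x)
    (hlip : ∀ i x y, enorm' (gradf i x - gradf i y) ≤ L * enorm' (x - y)) (x s : Fin d → ℝ) :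
    fbar f (x + s) ≤ fbar f x + ∑ j, gradfbar gradf x j * s j + L / 2 * sqnorm s := by
  have hn' : (0 : ℝ) < n := by exact_mod_cast hn
  have h := Finset.sum_le_sum fun i (_ : i ∈ Finset.univ) =>
    smooth_upper_bound (f i) (gradf i) L (hdiff i) (hlip i) x s
  have h2 := mul_le_mul_of_nonneg_left h (inv_nonneg.2 hn'.le)
  refine h2.trans_eq ?_
  have h3 : ∑ j, gradfbar gradf x j * s j = (n : ℝ)⁻¹ * ∑ i, ∑ j, gradf i x j * s j := by
    rw [Finset.sum_comm, Finset.mul_sum]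
    exact Finset.sum_congr rfl fun j _ => by rw [gradfbar, mul_assoc, Finset.sum_mul]
  rw [h3, fbar]
  simp only [Finset.sum_add_distrib, Finset.sum_const, Finset.card_univ, Fintype.card_fin,
    nsmul_eq_mul]
  field_simp

lemma sqnorm_gradF_sub_le {n d : ℕ} (gradf : Fin n → (Fin d → ℝ) → (Fin d → ℝ)) (L : ℝ)
    (hlip : ∀ i x y, enorm' (gradf i x - gradf i y) ≤ L * enorm' (x - y))
    (X Y : Fin n × Fin d → ℝ) :
    sqnorm (gradF gradf X - gradF gradf Y) ≤ L ^ 2 * sqnorm (X - Y) := by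
  simp only [sqnorm, Fintype.sum_prod_type]
  rw [Finset.mul_sum]
  refine Finset.sum_le_sum fun i _ => ?_
  have h := hlip i (fun j => X (i, j)) (fun j => Y (i, j))
  have h2 := pow_le_pow_left₀ (Real.sqrt_nonneg _) h 2
  simp only [enorm', mul_pow, Real.sq_sqrt (sqnorm_nonneg _)] at h2
  exact h2

/-- Young's inequality in one coordinate; `q`, `g`, `D` are coordinates of the averaged gradient at
consensus, the average of the local gradients, and the average surrogate error.  The coefficient of `q ^ 2` is
`-1 + 1/2 + 1/8 + 2Lα` times `α`, and `Lα ≤ 1/16` turns it into `-1/4`. -/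
lemma young_coord (L α h q g D : ℝ) (hL : 0 < L) (hα0 : 0 < α) (hα : L * α ≤ 1 / 16) :
    q * (α * (h * D - g)) + L / 2 * (α * (h * D - g)) ^ 2 ≤
      -(α / 4) * q ^ 2 + (α / 2 + 2 * α ^ 2 * L) * (g - q) ^ 2 +
        α * h ^ 2 * (L * α + 2) * D ^ 2 := by
  have hε : 0 < L * α := mul_pos hL hα0
  obtain ⟨r, rfl⟩ : ∃ r, g = q + r := ⟨g - q, by ring⟩
  obtain ⟨w, hw⟩ : ∃ w, w = h * D := ⟨_, rfl⟩
  have key : q * (w - (q + r)) + L * α / 2 * (w - (q + r)) ^ 2 ≤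
      -(1 / 4) * q ^ 2 + (1 / 2 + 2 * (L * α)) * r ^ 2 + (L * α + 2) * w ^ 2 := by
    have h1 : (w - (q + r)) ^ 2 ≤ 2 * w ^ 2 + 4 * q ^ 2 + 4 * r ^ 2 := by
      nlinarith [sq_nonneg (w + (q + r)), sq_nonneg (q - r)]
    have h2 := mul_le_mul_of_nonneg_left h1 (half_pos hε).le
    have h3 := mul_le_mul_of_nonneg_right hα (sq_nonneg q)
    nlinarith [sq_nonneg (q + r), sq_nonneg (q - 4 * w)]
  have h2 := mul_le_mul_of_nonneg_left key hα0.le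
  rw [← hw]
  have e : α * h ^ 2 * (L * α + 2) * D ^ 2 = α * (L * α + 2) * w ^ 2 := by rw [hw]; ring
  rw [e]
  linear_combination h2

/-! ### Descent -/

/-- **Descent lemma.**  If each fᵢ is L-smooth, λ̃ᵗ = Ãᵀμ, and X^{t+1} is given by the TiCoPD
primal step with β = 1 − αθM and 0 < α ≤ 1/(16L), then
f(X̄^{t+1}) ≤ f(X̄ᵗ) − (α/4)‖∇f(X̄ᵗ)‖² + (αL²/(2n) + 2α²L³/n)‖Xᵗ‖²_K̃
            + (αθ²M²(Lα+2)/n)‖X̂ᵗ − Xᵗ‖². -/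
theorem ticopd_descent_lemma
    {n d e : ℕ} (hn : 2 ≤ n) (hd : 1 ≤ d)
    (A : Matrix (Fin e) (Fin n) ℝ) (hA : IsIncidence A)
    -- Assumption 1
    (f : Fin n → (Fin d → ℝ) → ℝ) (gradf : Fin n → (Fin d → ℝ) → (Fin d → ℝ)) (L : ℝ)
    (hdiff : ∀ i x, HasFDerivAt (f i) (dotCLM (gradf i x)) x)
    (hlip : ∀ i x y, enorm' (gradf i x - gradf i y) ≤ L * enorm' (x - y))
    -- dual variable in the range of Ãᵀ
    (lam : Fin n × Fin d → ℝ) (μv : Fin e × Fin d → ℝ) (hlam : lam = (Atil d A)ᵀ.mulVec μv)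
    -- step sizes
    (α β θ : ℝ) (hθ : 0 < θ) (hβ : β = 1 - α * θ * specNorm (lapl d A))
    (hα0 : 0 < α) (hα : α ≤ 1 / (16 * L))
    -- one primal step
    (X Xhat Xnext : Fin n × Fin d → ℝ)
    (hXnext : Xnext = β • X + (1 - β) • Xhat -
        α • (gradF gradf X + lam + θ • (lapl d A).mulVec Xhat)) :
    fbar f (xbar Xnext) ≤ fbar f (xbar X) - (α / 4) * sqnorm (gradfbar gradf (xbar X)) +
      (α * L ^ 2 / (2 * n) + 2 * α ^ 2 * L ^ 3 / n) * wnorm2 (Ktil n d) X +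
      (α * θ ^ 2 * (specNorm (lapl d A)) ^ 2 * (L * α + 2) / n) * sqnorm (Xhat - X) := by
  have hn0 : 0 < n := by omega
  have hn' : (0 : ℝ) < n := by exact_mod_cast hn0
  -- For `L ≤ 0` the bound `1 / (16 * L)` is nonpositive (`1 / 0 = 0` included).
  have hL : 0 < L := by
    by_contra hL
    have : 1 / (16 * L) ≤ 0 := one_div_nonpos.2 (by linarith)
    linarith
  have hLα : L * α ≤ 1 / 16 := by
    rw [le_div_iff₀ (by positivity)] at hα
    linarith
  set M := specNorm (lapl d A) with hM
  set D := xbar (Xhat - X) with hD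
  set g := xbar (gradF gradf X) with hg
  set q := gradfbar gradf (xbar X) with hq
  have hstep : xbar Xnext = xbar X + α • ((θ * M) • D - g) := by
    have hlap : xbar ((lapl d A).mulVec Xhat) = 0 := by
      rw [lapl, ← Matrix.mulVec_mulVec]
      exact xbar_range A hA _
    have hl : xbar lam = 0 := hlam ▸ xbar_range A hA _
    rw [hXnext, hD]
    simp only [xbar_sub, xbar_add, xbar_smul, hlap, hl]
    rw [hβ]
    funext j
    simp
    ring
  have hr : sqnorm (g - q) ≤ L ^ 2 / n * wnorm2 (Ktil n d) X := by
    rw [hg, hq, ← gradF_consVec, ← xbar_sub, wnorm2_Ktil hn0]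
    refine (sqnorm_xbar_le hn0 _).trans ?_
    rw [div_eq_inv_mul, mul_assoc]
    exact mul_le_mul_of_nonneg_left (sqnorm_gradF_sub_le gradf L hlip _ _) (inv_nonneg.2 hn'.le)
  have hDn : sqnorm D ≤ (n : ℝ)⁻¹ * sqnorm (Xhat - X) := sqnorm_xbar_le hn0 _
  have hdesc := fbar_upper_bound hn0 f gradf L hdiff hlip (xbar X) (α • ((θ * M) • D - g))
  rw [← hstep, ← hq] at hdesc
  have hsum : ∑ j, q j * (α • ((θ * M) • D - g)) j + L / 2 * sqnorm (α • ((θ * M) • D - g)) ≤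
      -(α / 4) * sqnorm q + (α / 2 + 2 * α ^ 2 * L) * sqnorm (g - q) +
        α * (θ * M) ^ 2 * (L * α + 2) * sqnorm D := by
    simp only [sqnorm, Finset.mul_sum, ← Finset.sum_add_distrib]
    exact Finset.sum_le_sum fun j _ => young_coord L α (θ * M) (q j) (g j) (D j) hL hα0 hLα
  have h1 := mul_le_mul_of_nonneg_left hr (by positivity : 0 ≤ α / 2 + 2 * α ^ 2 * L)
  have h2 := mul_le_mul_of_nonneg_left hDn
    (by positivity : 0 ≤ α * (θ * M) ^ 2 * (L * α + 2))
  have e1 : (α / 2 + 2 * α ^ 2 * L) * (L ^ 2 / n * wnorm2 (Ktil n d) X) =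
      (α * L ^ 2 / (2 * n) + 2 * α ^ 2 * L ^ 3 / n) * wnorm2 (Ktil n d) X := by
    field_simp
  have e2 : α * (θ * M) ^ 2 * (L * α + 2) * ((n : ℝ)⁻¹ * sqnorm (Xhat - X)) =
      α * θ ^ 2 * M ^ 2 * (L * α + 2) / n * sqnorm (Xhat - X) := by
    field_simp
  linarith
end
end

section
/- (One-step error-feedback contraction.) Let Q(·;ξ) : ℝ^m → ℝ^m be a randomized operator satisfying E_ξ‖Q(x;ξ) − x‖² ≤ (1−δ)²‖x‖² for every fixed x ∈ ℝ^m, with δ ∈ (0,1). Then for any fixed vectors x, x̂, y ∈ ℝ^m: E_ξ‖x̂ + Q(y − x̂; ξ) − y‖² ≤ δ̃₀‖y − x‖² + (1 − δ/2)²‖x − x̂‖², where δ̃₀ = (1−δ)²(1−δ/2)²/((1−δ/2)² − (1−δ)²). -/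
/-! The compression error at `y - x̂` equals `x̂ + Q (y - x̂) ω - y` up to rearrangement, so the
compression bound gives `A ‖y - x̂‖²` with `A = (1 - δ)²`. Splitting `y - x̂ = (y - x) + (x - x̂)`,
Young's inequality with the weight that makes the second coefficient exactly `B = (1 - δ/2)²` gives
the first coefficient `A B / (B - A)`; this weight is admissible because `A < B`. `young_sq` is the scalar inequality;
`young_sqnorm` sums it over coordinates. -/

open Matrix MeasureTheory ProbabilityTheory
open scoped Kronecker

noncomputable section

/-- Weighted Young inequality: multiplied by `B - A`, the difference of the two sides is
the square `(A u - (B - A) v)²`. -/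
theorem young_sq {A B : ℝ} (hAB : A < B) (u v : ℝ) :
    A * (u + v) ^ 2 ≤ A * B / (B - A) * u ^ 2 + B * v ^ 2 := by
  have hpos : 0 < B - A := sub_pos.mpr hAB
  have hne := hpos.ne'
  have key : A * B / (B - A) * u ^ 2 + B * v ^ 2 - A * (u + v) ^ 2
      = (A * u - (B - A) * v) ^ 2 / (B - A) := by
    field_simp
    ring
  have : 0 ≤ (A * u - (B - A) * v) ^ 2 / (B - A) := by positivity
  linarith

theorem young_sqnorm {ι : Type*} [Fintype ι] {A B : ℝ} (hAB : A < B) (u v : ι → ℝ) :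
    A * sqnorm (u + v) ≤ A * B / (B - A) * sqnorm u + B * sqnorm v := by
  unfold sqnorm
  rw [Finset.mul_sum, Finset.mul_sum, Finset.mul_sum, ← Finset.sum_add_distrib]
  exact Finset.sum_le_sum fun i _ => young_sq hAB (u i) (v i)

/-- **One-step error-feedback contraction.**  If E‖Q(x;ξ) − x‖² ≤ (1−δ)²‖x‖² for every fixed x,
with δ ∈ (0,1), then for all fixed x, x̂, y:
E‖x̂ + Q(y − x̂;ξ) − y‖² ≤ δ̃₀‖y − x‖² + (1 − δ/2)²‖x − x̂‖²,
where δ̃₀ = (1−δ)²(1−δ/2)²/((1−δ/2)² − (1−δ)²). -/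
theorem error_feedback_one_step_contraction
    {m : ℕ} {Ω : Type*} [MeasurableSpace Ω] (μ : Measure Ω) [IsProbabilityMeasure μ]
    (Q : (Fin m → ℝ) → Ω → (Fin m → ℝ))
    (δ : ℝ) (hδ0 : 0 < δ) (hδ1 : δ < 1)
    (hQ : ∀ x : Fin m → ℝ, ∫ ω, sqnorm (Q x ω - x) ∂μ ≤ (1 - δ) ^ 2 * sqnorm x) :
    ∀ x xhat y : Fin m → ℝ,
      (∫ ω, sqnorm (xhat + Q (y - xhat) ω - y) ∂μ) ≤
        ((1 - δ) ^ 2 * (1 - δ / 2) ^ 2 / ((1 - δ / 2) ^ 2 - (1 - δ) ^ 2)) * sqnorm (y - x) +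
          (1 - δ / 2) ^ 2 * sqnorm (x - xhat) := by
  intro x xhat y
  have hAB : (1 - δ) ^ 2 < (1 - δ / 2) ^ 2 := by nlinarith
  have hrw : ∀ ω, xhat + Q (y - xhat) ω - y = Q (y - xhat) ω - (y - xhat) := fun ω => by abel
  simp only [hrw]
  refine (hQ (y - xhat)).trans ?_
  have h := young_sqnorm hAB (y - x) (x - xhat)
  rwa [sub_add_sub_cancel] at h

end
end

section
/- (Contractivity of randomized quantization.) Let s be a positive integer, d ≥ 1, τ = 1 + min{d/s², √d/s}, and for x ∈ ℝ^d \ {0} define the randomized quantizer componentwise by qsgd_s(x;ξ) = (sign(x)·‖x‖/(sτ))·⌊s|x|/‖x‖ + ξ⌋ with ξ uniformly distributed on [0,1]^d, and qsgd_s(0;ξ) = 0. Then for every x ∈ ℝ^d: E_ξ‖qsgd_s(x;ξ) − x‖² ≤ (1 − 1/(2τ))²‖x‖²; that is, qsgd_s satisfies the compression contraction property with δ = 1/(2τ). -/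
/-!
Write `a i = s |x i| / ‖x‖`. Stochastic rounding `⌊a i + ξ i⌋` takes only the values `⌊a i⌋` and
`⌊a i⌋ + 1`, with mean `a i` and variance `fract (a i) * (1 - fract (a i))`
(`integral_floor_add`, `integral_sq_floor_add`). Hence the quantizer multiplied by `τ` is unbiased,
and its total variance is at most `(τ - 1) ‖x‖²`, since `∑ fract (a i) * (1 - fract (a i))` is
bounded both by `d` and, through Cauchy–Schwarz, by `∑ a i ≤ s √d` (`sum_fract_le`).
Dividing by `τ`, the mean squared error is at most
`((1 / τ - 1)² + (τ - 1) / τ²) ‖x‖² = (1 - 1 / τ) ‖x‖² ≤ (1 - 1 / (2 τ))² ‖x‖²`.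
-/

open Matrix MeasureTheory ProbabilityTheory
open scoped Kronecker

noncomputable section

/-- τ = 1 + min{d/s², √d/s}. -/
def tauQ (s d : ℕ) : ℝ := 1 + min ((d : ℝ) / (s : ℝ) ^ 2) (Real.sqrt d / s)

open scoped Classical in
/-- the randomized quantizer qsgd_s(x;ξ), defined componentwise by
sign(xᵢ)·‖x‖/(sτ)·⌊s|xᵢ|/‖x‖ + ξᵢ⌋ for x ≠ 0, and qsgd_s(0;ξ) = 0. -/
def qsgd (s d : ℕ) (x ξ : Fin d → ℝ) : Fin d → ℝ :=
  if x = 0 then 0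
  else fun i =>
    Real.sign (x i) * enorm' x / (s * tauQ s d) *
      ((⌊(s : ℝ) * |x i| / enorm' x + ξ i⌋ : ℤ) : ℝ)

/-- For `u` in `[0,1]`, the value `⌊a + u⌋` is `⌊a⌋` below `1 - fract a` and `⌊a⌋ + 1` from there
on, so `⌊a + u⌋` is a two-point random variable when `u` is uniform. -/
lemma floor_add_eqOn (g : ℤ → ℝ) (a : ℝ) :
    Set.EqOn (fun u : ℝ => g ⌊a + u⌋)
      (fun u => g ⌊a⌋ + (Set.Ici (1 - Int.fract a)).indicator
        (fun _ => g (⌊a⌋ + 1) - g ⌊a⌋) u) (Set.Icc 0 1) := by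
  intro u hu
  obtain ⟨h0, h1⟩ := hu
  have ha := Int.floor_add_fract a
  have hf0 := Int.fract_nonneg a
  have hf1 := Int.fract_lt_one a
  by_cases h : 1 - Int.fract a ≤ u
  · have : ⌊a + u⌋ = ⌊a⌋ + 1 := by
      rw [Int.floor_eq_iff]; push_cast; constructor <;> linarith
    simp [this, h]
  · have : ⌊a + u⌋ = ⌊a⌋ := by
      rw [Int.floor_eq_iff]; constructor <;> linarith
    simp [this, h]

lemma integrable_floor_add (g : ℤ → ℝ) (a : ℝ) :
    Integrable (fun u : ℝ => g ⌊a + u⌋) (volume.restrict (Set.Icc (0 : ℝ) 1)) := by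
  refine IntegrableOn.congr_fun ?_ (floor_add_eqOn g a).symm measurableSet_Icc
  exact (integrable_const _).add ((integrable_const _).indicator measurableSet_Ici)

lemma integral_floor_add (g : ℤ → ℝ) (a : ℝ) :
    ∫ u in Set.Icc (0 : ℝ) 1, g ⌊a + u⌋ =
      (1 - Int.fract a) * g ⌊a⌋ + Int.fract a * g (⌊a⌋ + 1) := by
  have hf0 := Int.fract_nonneg a
  have hf1 := Int.fract_lt_one a
  rw [setIntegral_congr_fun measurableSet_Icc (floor_add_eqOn g a),
    integral_add (integrable_const _) ((integrable_const _).indicator measurableSet_Ici),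
    integral_indicator_const _ measurableSet_Ici, measureReal_restrict_apply measurableSet_Ici]
  have : Set.Ici (1 - Int.fract a) ∩ Set.Icc (0 : ℝ) 1 = Set.Icc (1 - Int.fract a) 1 := by
    ext u
    simp only [Set.mem_inter_iff, Set.mem_Ici, Set.mem_Icc]
    constructor
    · rintro ⟨h, _, h1⟩; exact ⟨h, h1⟩
    · rintro ⟨h, h1⟩; exact ⟨h, by linarith, h1⟩
  rw [this]
  simp [hf0]
  ring

/-- Bias–variance form of the mean squared error of stochastic rounding: `⌊a + u⌋` has mean `a`
and variance `fract a * (1 - fract a)`. -/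
lemma integral_sq_floor_add (a c y : ℝ) :
    ∫ u in Set.Icc (0 : ℝ) 1, (c * ((⌊a + u⌋ : ℤ) : ℝ) - y) ^ 2 =
      (c * a - y) ^ 2 + c ^ 2 * (Int.fract a * (1 - Int.fract a)) := by
  rw [integral_floor_add (fun k : ℤ => (c * (k : ℝ) - y) ^ 2) a]
  have ha := Int.floor_add_fract a
  have : (⌊a⌋ : ℝ) = a - Int.fract a := by linarith
  push_cast
  rw [this]
  ring

/-- The total rounding variance: each term is at most `1` and at most `a i`, and the sum of the
`a i` is controlled by Cauchy–Schwarz. -/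
lemma sum_fract_le {s d : ℕ} (hs : 0 < s) (a : Fin d → ℝ) (ha : ∀ i, 0 ≤ a i)
    (hsum : ∑ i, a i ^ 2 = (s : ℝ) ^ 2) :
    ∑ i, Int.fract (a i) * (1 - Int.fract (a i)) ≤ (s : ℝ) ^ 2 * (tauQ s d - 1) := by
  have hs' : (0 : ℝ) < s := by exact_mod_cast hs
  have h1 : ∑ i, Int.fract (a i) * (1 - Int.fract (a i)) ≤ d := by
    calc _ ≤ ∑ _i : Fin d, (1 : ℝ) := by
          refine Finset.sum_le_sum fun i _ => ?_
          nlinarith [sq_nonneg (Int.fract (a i) - 1 / 2)]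
      _ = d := by simp
  have h2 : ∑ i, Int.fract (a i) * (1 - Int.fract (a i)) ≤ s * Real.sqrt d := by
    calc _ ≤ ∑ i, a i := by
          refine Finset.sum_le_sum fun i _ => ?_
          have hfl : (0 : ℝ) ≤ ⌊a i⌋ := by exact_mod_cast Int.floor_nonneg.2 (ha i)
          nlinarith [sq_nonneg (Int.fract (a i)), Int.floor_add_fract (a i)]
      _ ≤ s * Real.sqrt d := by
          refine abs_le_of_sq_le_sq' ?_ (by positivity) |>.2
          have := sq_sum_le_card_mul_sum_sq (s := Finset.univ) (f := a)
          rw [hsum] at this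
          rw [mul_pow, Real.sq_sqrt (Nat.cast_nonneg d)]
          simp only [Finset.card_univ, Fintype.card_fin] at this
          linarith
  unfold tauQ
  rw [add_sub_cancel_left, mul_min_of_nonneg _ _ (by positivity)]
  refine le_min (h1.trans_eq (by field_simp)) (h2.trans_eq (by field_simp))

/-- **Contractivity of randomized quantization.**  For ξ uniform on [0,1]^d,
E_ξ‖qsgd_s(x;ξ) − x‖² ≤ (1 − 1/(2τ))²‖x‖² for every x ∈ ℝ^d; i.e. qsgd_s satisfies the
compression contraction property with δ = 1/(2τ). -/
theorem qsgd_contraction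
    (s d : ℕ) (hs : 0 < s) (hd : 1 ≤ d) :
    ∀ x : Fin d → ℝ,
      (∫ ξ, sqnorm (qsgd s d x ξ - x)
          ∂(Measure.pi fun _ : Fin d => volume.restrict (Set.Icc (0 : ℝ) 1))) ≤
        (1 - 1 / (2 * tauQ s d)) ^ 2 * sqnorm x := by
  intro x
  have hs' : (0 : ℝ) < s := by exact_mod_cast hs
  have hτ : 1 ≤ tauQ s d := by
    unfold tauQ
    have : 0 ≤ min ((d : ℝ) / (s : ℝ) ^ 2) (Real.sqrt d / s) := by positivity
    linarith
  have hτ0 : tauQ s d ≠ 0 := by linarith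
  by_cases hx : x = 0
  · subst hx
    simp [qsgd, sqnorm]
  have hN2 : 0 < sqnorm x := by
    obtain ⟨i, hi⟩ := Function.ne_iff.1 hx
    exact Finset.sum_pos' (fun i _ => sq_nonneg _) ⟨i, Finset.mem_univ _, sq_pos_of_ne_zero hi⟩
  have hN : 0 < enorm' x := Real.sqrt_pos.2 hN2
  have hNsq : enorm' x ^ 2 = sqnorm x := Real.sq_sqrt hN2.le
  set N := enorm' x with hNdef
  set τ := tauQ s d with hτdef
  have : IsProbabilityMeasure (volume.restrict (Set.Icc (0 : ℝ) 1)) := ⟨by simp⟩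
  let a : Fin d → ℝ := fun i => (s : ℝ) * |x i| / N
  let c : Fin d → ℝ := fun i => Real.sign (x i) * N / (s * τ)
  have hInt : ∀ i, Integrable (fun u : ℝ => (c i * ((⌊a i + u⌋ : ℤ) : ℝ) - x i) ^ 2)
      (volume.restrict (Set.Icc (0 : ℝ) 1)) := fun i =>
    integrable_floor_add (fun k : ℤ => (c i * (k : ℝ) - x i) ^ 2) (a i)
  have hval : (∫ ξ, sqnorm (qsgd s d x ξ - x)
      ∂(Measure.pi fun _ : Fin d => volume.restrict (Set.Icc (0 : ℝ) 1))) =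
      ∑ i, ((c i * a i - x i) ^ 2 + c i ^ 2 * (Int.fract (a i) * (1 - Int.fract (a i)))) := by
    have : ∀ ξ, sqnorm (qsgd s d x ξ - x) =
        ∑ i, (c i * ((⌊a i + ξ i⌋ : ℤ) : ℝ) - x i) ^ 2 := by
      intro ξ
      simp only [sqnorm, qsgd, if_neg hx, Pi.sub_apply, a, c, N, τ]
    simp_rw [this]
    have hInt' : ∀ i, Integrable (fun ξ : Fin d → ℝ => (c i * ((⌊a i + ξ i⌋ : ℤ) : ℝ) - x i) ^ 2)
        (Measure.pi fun _ : Fin d => volume.restrict (Set.Icc (0 : ℝ) 1)) := fun i =>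
      integrable_comp_eval (μ := fun _ : Fin d => volume.restrict (Set.Icc (0 : ℝ) 1)) (hInt i)
    rw [integral_finsetSum _ fun i _ => hInt' i]
    refine Finset.sum_congr rfl fun i _ => ?_
    rw [← integral_sq_floor_add]
    exact integral_comp_eval (μ := fun _ : Fin d => volume.restrict (Set.Icc (0 : ℝ) 1))
      (hInt i).aestronglyMeasurable
  have ha0 : ∀ i, 0 ≤ a i := fun i => by positivity
  have hasum : ∑ i, a i ^ 2 = (s : ℝ) ^ 2 := by
    have : ∀ i, a i ^ 2 = (s : ℝ) ^ 2 / N ^ 2 * x i ^ 2 := fun i => by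
      simp only [a]; rw [div_pow, mul_pow, sq_abs]; ring
    simp_rw [this]
    rw [← Finset.mul_sum, hNsq]
    change _ / sqnorm x * sqnorm x = _
    field_simp
  -- Before the division by `τ` the quantizer is unbiased.
  have hca : ∀ i, c i * a i = x i / τ := fun i => by
    have : Real.sign (x i) * |x i| = x i := by
      rcases lt_trichotomy (x i) 0 with h | h | h
      · rw [Real.sign_of_neg h, abs_of_neg h]; ring
      · simp [h]
      · rw [Real.sign_of_pos h, abs_of_pos h]; ring
    calc c i * a i = (Real.sign (x i) * |x i|) / τ := by simp only [c, a]; field_simp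
      _ = _ := by rw [this]
  have hc2 : ∀ i, c i ^ 2 ≤ N ^ 2 / (s ^ 2 * τ ^ 2) := fun i => by
    have : Real.sign (x i) ^ 2 ≤ 1 := by
      rcases Real.sign_apply_eq (x i) with h | h | h <;> rw [h] <;> norm_num
    simp only [c]
    rw [div_pow, mul_pow, mul_pow]
    gcongr
    nlinarith [sq_nonneg N]
  rw [hval]
  calc _ ≤ ∑ i, ((1 / τ - 1) ^ 2 * x i ^ 2 +
          N ^ 2 / (s ^ 2 * τ ^ 2) * (Int.fract (a i) * (1 - Int.fract (a i)))) := by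
        refine Finset.sum_le_sum fun i _ => add_le_add (le_of_eq ?_) ?_
        · rw [hca]; ring
        · exact mul_le_mul_of_nonneg_right (hc2 i) (mul_nonneg (Int.fract_nonneg _)
            (sub_nonneg.2 (Int.fract_lt_one _).le))
    _ = (1 / τ - 1) ^ 2 * sqnorm x + N ^ 2 / (s ^ 2 * τ ^ 2) *
          ∑ i, Int.fract (a i) * (1 - Int.fract (a i)) := by
        rw [Finset.sum_add_distrib, ← Finset.mul_sum, ← Finset.mul_sum]; rfl
    _ ≤ (1 / τ - 1) ^ 2 * sqnorm x + N ^ 2 / (s ^ 2 * τ ^ 2) * ((s : ℝ) ^ 2 * (τ - 1)) := by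
        gcongr
        exact sum_fract_le hs a ha0 hasum
    _ = (1 - 1 / τ) * sqnorm x := by
        rw [hNsq]; field_simp; ring
    _ ≤ (1 - 1 / (2 * τ)) ^ 2 * sqnorm x := by
        refine mul_le_mul_of_nonneg_right ?_ hN2.le
        have : (1 - 1 / (2 * τ)) ^ 2 = 1 - 1 / τ + (1 / (2 * τ)) ^ 2 := by field_simp; ring
        rw [this]
        linarith [sq_nonneg (1 / (2 * τ))]

end
end
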